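/- arXiv:2203.06005 — 2 statements merged into one kernel-verified Lean document; each statement's English description precedes it below -/
import Mathlib

section
/- Let R be a right semiartinian ring with right socle sequence (S_α | α ≤ σ+1). Then the following are equivalent: (1) R is von Neumann regular with primitive factors artinian; (2) for each α ≤ σ there are a cardinal λ_α, positive integers n_{αβ} (β < λ_α), and skew-fields K_{αβ} (β < λ_α) such that the α-th layer L_α = S_{α+1}/S_α is isomorphic, as a ring without unit, to the direct sum ⊕_{β<λ_α} M_{n_{αβ}}(K_{αβ}) of full matrix rings, λ_α is infinite iff α < σ, and for each β < λ_α the preimage of M_{n_{αβ}}(K_{αβ}) under this isomorphism equals the β-th homogeneous component of Soc(R/S_α) and is finitely generated as a right R/S_α-module. -/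
universe u

open Submodule Function

/-- The socle of a module: the supremum of all simple submodules. -/
def moduleSocle (R : Type*) (M : Type*) [Ring R] [AddCommGroup M] [Module R M] :
    Submodule R M :=
  sSup {W : Submodule R M | IsSimpleModule R ↥W}

/-- A ring is right semiartinian if every nonzero quotient of the right module `R_R`
has a nonzero socle. -/
def IsRightSemiartinian (R : Type u) [Ring R] : Prop :=
  ∀ I : Submodule Rᵐᵒᵖ R, I ≠ ⊤ → moduleSocle Rᵐᵒᵖ (R ⧸ I) ≠ ⊥

/-- The right socle sequence of a ring: `S_0 = 0`, `S_{α+1}/S_α = Soc(R/S_α)`,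
and unions at limits. -/
noncomputable def socleSeq (R : Type u) [Ring R] : Ordinal.{u} → Submodule Rᵐᵒᵖ R :=
  fun o => Ordinal.limitRecOn o ⊥
    (fun _ S => Submodule.comap S.mkQ (moduleSocle Rᵐᵒᵖ (R ⧸ S)))
    (fun o _ ih => ⨆ (β : Ordinal.{u}) (h : β < o), ih β h)

/-- `S_α`, viewed as a submodule of `S_{α+1}`; the kernel of the `α`-th layer
epimorphism `π_α : S_{α+1} → S_{α+1}/S_α`. -/
noncomputable def layerKer (R : Type u) [Ring R] (α : Ordinal.{u}) :
    Submodule Rᵐᵒᵖ ↥(socleSeq R (α + 1)) :=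
  (socleSeq R α).comap (socleSeq R (α + 1)).subtype

/-- The `α`-th layer `L_α = S_{α+1}/S_α` of a ring. -/
noncomputable abbrev Layer (R : Type u) [Ring R] (α : Ordinal.{u}) :=
  ↥(socleSeq R (α + 1)) ⧸ layerKer R α

/-- A module `M` is weakly `R`-projective if for each `0 < α ≤ σ`, every homomorphism
`f : M → L_α` with finitely generated image factors through the `α`-th layer
epimorphism `π_α : S_{α+1} → L_α`. -/
def WeaklyRProjective (R : Type u) [Ring R] (σ : Ordinal.{u})
    (M : Type u) [AddCommGroup M] [Module Rᵐᵒᵖ M] : Prop :=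
  ∀ α : Ordinal.{u}, 0 < α → α ≤ σ →
    ∀ f : M →ₗ[Rᵐᵒᵖ] Layer R α, (LinearMap.range f).FG →
      ∃ g : M →ₗ[Rᵐᵒᵖ] ↥(socleSeq R (α + 1)), (layerKer R α).mkQ ∘ₗ g = f

/-- A ring is von Neumann regular if each `r` admits `s` with `r * s * r = r`. -/
def IsVNRegular (R : Type u) [Ring R] : Prop :=
  ∀ r : R, ∃ s : R, r * s * r = r

/-- The annihilator of a right `R`-module, as a submodule of the right module `R_R`. -/
def rightAnnihilator (R : Type u) [Ring R] (M : Type u) [AddCommGroup M]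
    [Module Rᵐᵒᵖ M] : Submodule Rᵐᵒᵖ R where
  carrier := {r : R | ∀ m : M, MulOpposite.op r • m = 0}
  add_mem' := by
    intro a b ha hb m
    rw [MulOpposite.op_add, add_smul, ha m, hb m, add_zero]
  zero_mem' := by
    intro m
    rw [MulOpposite.op_zero, zero_smul]
  smul_mem' := by
    intro c r hr m
    have h : MulOpposite.op (c • r) = c * MulOpposite.op r := by
      rw [MulOpposite.smul_eq_mul_unop, MulOpposite.op_mul, MulOpposite.op_unop]
    rw [h, mul_smul, hr m, smul_zero]

/-- A ring has (right) primitive factors artinian if, for each right primitive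
(two-sided) ideal `P`, i.e. the annihilator of a simple right module, the factor
`R/P` is (right) artinian. -/
def HasPFA (R : Type u) [Ring R] : Prop :=
  ∀ (M : Type u) [AddCommGroup M] [Module Rᵐᵒᵖ M], IsSimpleModule Rᵐᵒᵖ M →
    IsArtinian Rᵐᵒᵖ (R ⧸ rightAnnihilator R M)

/-- A submodule `H` of a right module `M` is a homogeneous component if it is the sum of
all submodules isomorphic to some fixed simple submodule `T` of `M`. -/
def IsHomogeneousComponent (R : Type u) [Ring R] (M : Type u) [AddCommGroup M]
    [Module Rᵐᵒᵖ M] (H : Submodule Rᵐᵒᵖ M) : Prop :=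
  ∃ T : Submodule Rᵐᵒᵖ M, IsSimpleModule Rᵐᵒᵖ ↥T ∧
    H = sSup {W : Submodule Rᵐᵒᵖ M | Nonempty (↥W ≃ₗ[Rᵐᵒᵖ] ↥T)}

/-- The structure of the `α`-th layer `L_α = S_{α+1}/S_α = Soc(R/S_α)` asserted in
condition (2) of Theorem 7 of the paper: there is an additive isomorphism `φ` of the
layer with the direct sum `⊕_{β < λ_α} M_{n_{αβ}}(K_{αβ})` of full matrix rings over
skew-fields which preserves the multiplication induced from `R` (i.e. it is an
isomorphism of rings without unit), `λ_α` is infinite iff `α < σ`, and the preimages of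
the matrix summands are exactly the homogeneous components of `Soc(R/S_α)`, each of them
finitely generated as a right `R/S_α`-module. -/
def LayerDecomposition (R : Type u) [Ring R] (σ α : Ordinal.{u})
    (ι : Type u) (n : ι → ℕ) (K : ι → Type u) [∀ β, DivisionRing (K β)] : Prop :=
  ∃ φ : ↥(moduleSocle Rᵐᵒᵖ (R ⧸ socleSeq R α)) ≃+
      (Π₀ β : ι, Matrix (Fin (n β)) (Fin (n β)) (K β)),
    (∀ β, 0 < n β) ∧
    (Infinite ι ↔ α < σ) ∧
    (∀ (a b c : ↥(moduleSocle Rᵐᵒᵖ (R ⧸ socleSeq R α))) (x y : R),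
      (socleSeq R α).mkQ x = ↑a → (socleSeq R α).mkQ y = ↑b →
        (socleSeq R α).mkQ (x * y) = ↑c → ∀ β, φ c β = φ a β * φ b β) ∧
    ∃ H : ι → Submodule Rᵐᵒᵖ (R ⧸ socleSeq R α),
      (∀ β, (H β : Set (R ⧸ socleSeq R α)) =
        Subtype.val '' {s : ↥(moduleSocle Rᵐᵒᵖ (R ⧸ socleSeq R α)) |
          ∀ γ, γ ≠ β → φ s γ = 0}) ∧
      (∀ β, IsHomogeneousComponent R (R ⧸ socleSeq R α) (H β)) ∧
      (∀ β, (H β).FG) ∧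
      Function.Injective H ∧
      (∀ H' : Submodule Rᵐᵒᵖ (R ⧸ socleSeq R α),
        IsHomogeneousComponent R (R ⧸ socleSeq R α) H' → ∃ β, H' = H β)


section helpers

variable {R : Type u} [Ring R]

theorem socleSeq_zero : socleSeq R 0 = ⊥ := by
  unfold socleSeq; rw [Ordinal.limitRecOn_zero]

theorem socleSeq_succ (α : Ordinal.{u}) : socleSeq R (α + 1) =
    Submodule.comap (socleSeq R α).mkQ (moduleSocle Rᵐᵒᵖ (R ⧸ socleSeq R α)) := by
  unfold socleSeq; rw [Ordinal.limitRecOn_add_one]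

theorem socleSeq_limit (o : Ordinal.{u}) (ho : Order.IsSuccLimit o) : socleSeq R o =
    ⨆ (β : Ordinal.{u}) (_ : β < o), socleSeq R β := by
  unfold socleSeq; rw [Ordinal.limitRecOn_limit _ _ _ _ ho]

theorem socleSeq_le_succ (α : Ordinal.{u}) : socleSeq R α ≤ socleSeq R (α + 1) := by
  rw [socleSeq_succ]
  intro x hx
  rw [Submodule.mem_comap, Submodule.mkQ_apply, (Submodule.Quotient.mk_eq_zero _).2 hx]
  exact zero_mem _

theorem socleSeq_mono : Monotone (socleSeq R) := by
  intro β α h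
  induction α using Ordinal.limitRecOn with
  | zero => rw [nonpos_iff_eq_zero.1 h]
  | add_one a ih =>
    rcases h.lt_or_eq with h | rfl
    · exact (ih (Order.lt_add_one_iff.1 h)).trans (socleSeq_le_succ a)
    · exact le_rfl
  | limit o ho ih =>
    rcases h.lt_or_eq with h | rfl
    · rw [socleSeq_limit o ho]
      exact le_iSup₂_of_le β h le_rfl
    · exact le_rfl

/-- left multiplication as a right module endomorphism -/
def lmulR (r : R) : R →ₗ[Rᵐᵒᵖ] R where
  toFun x := r * x
  map_add' := mul_add r
  map_smul' c x := by
    simp [MulOpposite.smul_eq_mul_unop, mul_assoc]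

theorem moduleSocle_map_le {A M N : Type*} [Ring A] [AddCommGroup M] [Module A M]
    [AddCommGroup N] [Module A N] (f : M →ₗ[A] N) :
    moduleSocle A M ≤ (moduleSocle A N).comap f := by
  refine sSup_le ?_
  intro W hW
  have hW : IsSimpleModule A W := hW
  rw [← Submodule.map_le_iff_le_comap]
  rcases LinearMap.injective_or_eq_zero (f ∘ₗ W.subtype) with h | h
  · refine le_sSup ?_
    have e := LinearEquiv.ofInjective (f ∘ₗ W.subtype) h
    rw [LinearMap.range_comp, Submodule.range_subtype] at e
    exact IsSimpleModule.congr e.symm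
  · have : W.map f = ⊥ := by
      rw [← Submodule.range_subtype W, ← LinearMap.range_comp, h, LinearMap.range_zero]
    rw [this]; exact bot_le

/-- left multiplication on the quotient -/
def lmulQ (S : Submodule Rᵐᵒᵖ R) (hS : ∀ r x : R, x ∈ S → r * x ∈ S) :
    R →+* Module.End Rᵐᵒᵖ (R ⧸ S) where
  toFun r := S.mapQ S (lmulR r) (fun x hx => hS r x hx)
  map_one' := by
    refine LinearMap.ext fun x => ?_
    induction x using Submodule.Quotient.induction_on with | _ x => simp [lmulR]
  map_mul' r s := by
    refine LinearMap.ext fun x => ?_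
    induction x using Submodule.Quotient.induction_on with | _ x => simp [lmulR, mul_assoc]
  map_zero' := by
    refine LinearMap.ext fun x => ?_
    induction x using Submodule.Quotient.induction_on with | _ x => simp [lmulR]
  map_add' r s := by
    refine LinearMap.ext fun x => ?_
    induction x using Submodule.Quotient.induction_on with | _ x => simp [lmulR, add_mul]

@[simp] theorem lmulQ_mk (S : Submodule Rᵐᵒᵖ R) (hS : ∀ r x : R, x ∈ S → r * x ∈ S) (r x : R) :
    lmulQ S hS r (Submodule.Quotient.mk x) = Submodule.Quotient.mk (r * x) := rfl

theorem socleSeq_left (α : Ordinal.{u}) : ∀ r x : R, x ∈ socleSeq R α → r * x ∈ socleSeq R α := by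
  induction α using Ordinal.limitRecOn with
  | zero => intro r x; rw [socleSeq_zero]; simp only [Submodule.mem_bot]; rintro rfl; simp
  | add_one a ih =>
    intro r x hx
    rw [socleSeq_succ] at hx ⊢
    exact moduleSocle_map_le (lmulQ _ ih r) hx
  | limit o ho ih =>
    intro r
    have : socleSeq R o ≤ (socleSeq R o).comap (lmulR r) := by
      conv_lhs => rw [socleSeq_limit o ho]
      refine iSup₂_le fun β hβ x hx => ?_
      exact socleSeq_mono hβ.le (ih β hβ r x hx)
    intro x hx; exact this hx

theorem matrix_regular {n : ℕ} {K : Type*} [DivisionRing K] (A : Matrix (Fin n) (Fin n) K) :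
    ∃ B, A * B * A = A := by
  set f := A.toLinearMapRight' with hf
  obtain ⟨g, hg⟩ := f.rangeRestrict.exists_rightInverse_of_surjective f.range_rangeRestrict
  obtain ⟨g', hg'⟩ := g.exists_extend
  refine ⟨LinearMap.toMatrixRight' g', Matrix.toLinearMapRight'.injective ?_⟩
  rw [Matrix.toLinearMapRight'_mul, Matrix.toLinearMapRight'_mul, ← hf]
  refine LinearMap.ext fun v => ?_
  have h1 : g' (f v) = g (f.rangeRestrict v) := by rw [← hg']; rfl
  have h2 := congrArg Subtype.val (LinearMap.congr_fun hg (f.rangeRestrict v))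
  have h3 : Matrix.toLinearMapRight' (LinearMap.toMatrixRight' g') = g' :=
    LinearEquiv.symm_apply_apply _ _
  rw [h3]
  simp only [LinearMap.comp_apply] at *
  rw [h1]; exact h2

theorem mem_socleSeq_succ (α : Ordinal.{u}) (x : R) : x ∈ socleSeq R (α + 1) ↔
    (Submodule.Quotient.mk x : R ⧸ socleSeq R α) ∈ moduleSocle Rᵐᵒᵖ (R ⧸ socleSeq R α) := by
  rw [socleSeq_succ]; rfl

theorem right_mem {S : Submodule Rᵐᵒᵖ R} {x : R} (h : x ∈ S) (r : R) : x * r ∈ S :=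
  S.smul_mem (MulOpposite.op r) h

theorem regular_of_layers (σ : Ordinal.{u})
    (h : ∀ α : Ordinal.{u}, α ≤ σ →
        ∃ (ι : Type u) (n : ι → ℕ) (K : ι → Type u) (inst : ∀ β, DivisionRing (K β)),
          @LayerDecomposition R _ σ α ι n K inst) (α : Ordinal.{u}) (hα : α ≤ σ + 1) :
    ∀ x ∈ socleSeq R α, ∃ s, x * s * x = x := by
  induction α using Ordinal.limitRecOn with
  | zero => intro x; rw [socleSeq_zero, Submodule.mem_bot]; rintro rfl; exact ⟨0, by simp⟩
  | add_one a ih =>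
    have ha : a ≤ σ := by
      exact Order.lt_add_one_iff.1 (Order.add_one_le_iff.1 hα)
    intro x hx
    obtain ⟨ι, n, K, inst, φ, -, -, hm, -⟩ := h a ha
    have key : ∃ y, x - x * y * x ∈ socleSeq R a := by
      let a' : moduleSocle Rᵐᵒᵖ (R ⧸ socleSeq R a) := ⟨_, (mem_socleSeq_succ a x).1 hx⟩
      choose B hB using fun β => matrix_regular (φ a' β)
      classical
      let b : moduleSocle Rᵐᵒᵖ (R ⧸ socleSeq R a) :=
        φ.symm (DFinsupp.mk (φ a').support fun β => B β)
      obtain ⟨y, hy⟩ := Submodule.Quotient.mk_surjective _ b.1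
      have hxy := (mem_socleSeq_succ a (x * y)).1 (right_mem hx y)
      have hxyx := (mem_socleSeq_succ a (x * y * x)).1 (right_mem (right_mem hx y) x)
      refine ⟨y, ?_⟩
      have h1 := hm a' b ⟨_, hxy⟩ x y rfl hy rfl
      have h2 := hm ⟨_, hxy⟩ a' ⟨_, hxyx⟩ (x * y) x rfl rfl rfl
      have h3 : a' = ⟨_, hxyx⟩ := by
        apply φ.injective
        ext1 β
        rw [h2, h1]
        by_cases hβ : φ a' β = 0
        · simp [hβ]
        · have : φ b β = B β := by
            simp only [b, AddEquiv.apply_symm_apply]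
            rw [DFinsupp.mk_apply, dif_pos (by simpa using hβ)]
          rw [this, hB]
      have := congrArg Subtype.val h3
      exact (Submodule.Quotient.eq _).1 this
    obtain ⟨y, hy⟩ := key
    obtain ⟨z, hz⟩ := ih ((le_add_of_nonneg_right zero_le_one).trans hα) _ hy
    refine ⟨y + (1 - y * x) * z * (1 - x * y), ?_⟩
    calc _ = x * y * x + (x - x * y * x) * z * (x - x * y * x) := by noncomm_ring
      _ = x := by rw [hz]; abel
  | limit o ho ih =>
    intro x hx
    rw [socleSeq_limit o ho] at hx
    have hne : Nonempty {β // β < o} := ⟨⟨0, pos_iff_ne_zero.2 (by simpa using ho.ne_bot)⟩⟩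
    rw [iSup_subtype', Submodule.mem_iSup_of_directed] at hx
    · obtain ⟨β, hβ⟩ := hx
      exact ih β.1 β.2 (β.2.le.trans hα) x hβ
    · exact (socleSeq_mono.comp (Subtype.mono_coe _)).directed_le

theorem mem_rightAnnihilator {M : Type u} [AddCommGroup M] [Module Rᵐᵒᵖ M] {r : R} :
  r ∈ rightAnnihilator R M ↔ ∀ m : M, MulOpposite.op r • m = 0 := Iff.rfl

theorem op_smul_mk {S : Submodule Rᵐᵒᵖ R} (r x : R) :
    MulOpposite.op r • (Submodule.Quotient.mk x : R ⧸ S) = Submodule.Quotient.mk (x * r) := rfl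

theorem pfa_of_layers (σ : Ordinal.{u}) (hσ : socleSeq R (σ + 1) = ⊤)
    (h : ∀ α : Ordinal.{u}, α ≤ σ →
        ∃ (ι : Type u) (n : ι → ℕ) (K : ι → Type u) (inst : ∀ β, DivisionRing (K β)),
          @LayerDecomposition R _ σ α ι n K inst) : HasPFA R := by
  intro M _ _ hM
  set P := rightAnnihilator R M with hP
  have h1 : ¬ socleSeq R (σ + 1) ≤ P := by
    rw [hσ]
    intro hle
    have := IsSimpleModule.nontrivial Rᵐᵒᵖ M
    obtain ⟨m, hm⟩ := exists_ne (0 : M)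
    have := hle (Submodule.mem_top (x := (1 : R))) m
    simp at this; exact hm this
  have key : ∃ γ ≤ σ, socleSeq R γ ≤ P ∧ ¬ socleSeq R (γ + 1) ≤ P := by
    by_contra! hcon
    apply h1
    have : ∀ α : Ordinal.{u}, α ≤ σ + 1 → socleSeq R α ≤ P := by
      intro α
      induction α using Ordinal.limitRecOn with
      | zero => intro _; rw [socleSeq_zero]; exact bot_le
      | add_one a ih =>
        intro ha
        have ha' : a ≤ σ := Order.lt_add_one_iff.1 (Order.add_one_le_iff.1 ha)
        exact hcon a ha' (ih ((le_add_of_nonneg_right zero_le_one).trans ha))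
      | limit o ho ih =>
        intro h; rw [socleSeq_limit o ho]
        exact iSup₂_le fun β hβ => ih β hβ (hβ.le.trans h)
    exact this _ le_rfl
  obtain ⟨γ, hγ, hle, hnle⟩ := key
  obtain ⟨ι, n, K, inst, φ, hn, -, hm, H, hH, hHc, hfg, -, hall⟩ := h γ hγ
  obtain ⟨x, hx, hxP⟩ := SetLike.not_le_iff_exists.1 hnle
  obtain ⟨m, hm0⟩ : ∃ m : M, MulOpposite.op x • m ≠ 0 := by
    by_contra! hc; exact hxP hc
  let f0 : R →ₗ[Rᵐᵒᵖ] M :=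
    { toFun := fun r => MulOpposite.op r • m
      map_add' := fun a b => by rw [MulOpposite.op_add, add_smul]
      map_smul' := fun c a => by
        rw [MulOpposite.smul_eq_mul_unop, MulOpposite.op_mul, MulOpposite.op_unop, mul_smul]; rfl }
  let f : (R ⧸ socleSeq R γ) →ₗ[Rᵐᵒᵖ] M := (socleSeq R γ).liftQ f0 (fun r hr => hle hr m)
  obtain ⟨T, hT, hTf⟩ : ∃ T : Submodule Rᵐᵒᵖ (R ⧸ socleSeq R γ), IsSimpleModule Rᵐᵒᵖ T ∧
      ¬ T ≤ LinearMap.ker f := by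
    by_contra! hc
    have : moduleSocle Rᵐᵒᵖ (R ⧸ socleSeq R γ) ≤ LinearMap.ker f := sSup_le fun W hW => hc W hW
    exact hm0 (this ((mem_socleSeq_succ γ x).1 hx))
  have hne : f ∘ₗ T.subtype ≠ 0 := by
    intro h0; apply hTf
    intro t ht; exact LinearMap.congr_fun h0 ⟨t, ht⟩
  let e := LinearEquiv.ofBijective _ (LinearMap.bijective_of_ne_zero hne)
  obtain ⟨β, hβ⟩ := hall _ ⟨T, hT, rfl⟩
  have hTH : T ≤ H β := by rw [← hβ]; exact le_sSup ⟨LinearEquiv.refl _ _⟩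
  have hss : IsSemisimpleModule Rᵐᵒᵖ (H β) := by
    rw [← hβ]; exact inferInstanceAs (IsSemisimpleModule Rᵐᵒᵖ (isotypicComponent Rᵐᵒᵖ _ T))
  have hfin : Module.Finite Rᵐᵒᵖ (H β) := Module.Finite.iff_fg.2 (hfg β)
  have hart : IsArtinian Rᵐᵒᵖ (H β) := inferInstance
  classical
  let u : moduleSocle Rᵐᵒᵖ (R ⧸ socleSeq R γ) := φ.symm (DFinsupp.single β 1)
  obtain ⟨y, hy⟩ := Submodule.Quotient.mk_surjective _ u.1
  have huH : u.1 ∈ H β := by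
    rw [← SetLike.mem_coe, hH]
    refine ⟨u, ?_, rfl⟩
    intro δ hδ
    simp only [u, AddEquiv.apply_symm_apply]
    exact DFinsupp.single_eq_of_ne hδ
  have hyP : y - 1 ∈ P := by
    intro m'
    obtain ⟨⟨t, ht⟩, rfl⟩ := e.surjective m'
    rw [← map_smul]
    have : MulOpposite.op (y - 1) • (⟨t, ht⟩ : T) = 0 := by
      apply Subtype.ext
      obtain ⟨z, rfl⟩ := Submodule.Quotient.mk_surjective _ t
      change MulOpposite.op (y - 1) • (Submodule.Quotient.mk z) = _
      have htH := hTH ht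
      rw [← SetLike.mem_coe, hH] at htH
      obtain ⟨s, hs, hsz⟩ := htH
      have hzS : z ∈ socleSeq R (γ + 1) := by
        rw [mem_socleSeq_succ, ← hsz]; exact s.2
      have hzy := (mem_socleSeq_succ γ _).1 (right_mem hzS y)
      have h2 := hm s u ⟨_, hzy⟩ z y hsz.symm hy rfl
      have h3 : ⟨_, hzy⟩ = s := by
        apply φ.injective
        ext1 δ
        rw [h2]
        by_cases hδ : δ = β
        · subst hδ; simp [u]
        · rw [hs δ hδ, zero_mul]
      have h4 := congrArg Subtype.val h3
      rw [hsz] at h4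
      rw [op_smul_mk, mul_sub, mul_one, Submodule.Quotient.mk_sub]
      exact sub_eq_zero.2 h4
    rw [this, map_zero]
  let g : (R ⧸ socleSeq R γ) →ₗ[Rᵐᵒᵖ] (R ⧸ P) := Submodule.factor hle
  have hg : Function.Surjective (g ∘ₗ (H β).subtype) := by
    intro q
    obtain ⟨r, rfl⟩ := Submodule.Quotient.mk_surjective _ q
    refine ⟨MulOpposite.op r • ⟨u.1, huH⟩, ?_⟩
    rw [map_smul]
    have : (g ∘ₗ (H β).subtype) ⟨u.1, huH⟩ = Submodule.Quotient.mk 1 := by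
      change g u.1 = _
      rw [← hy]
      exact (Submodule.Quotient.eq _).2 hyP
    rw [this, op_smul_mk, one_mul]
  exact isArtinian_of_surjective _ _ hg

theorem exists_leftId (hreg : IsVNRegular R) (S : Submodule Rᵐᵒᵖ R)
    (hS : ∀ r x : R, x ∈ S → r * x ∈ S) (H : Submodule Rᵐᵒᵖ (R ⧸ S)) (hH : H.FG) :
    ∃ e : R, Submodule.Quotient.mk e ∈ H ∧ ∀ h ∈ H, lmulQ S hS e h = h := by
  induction H, hH using Submodule.fg_induction with
  | singleton x =>
    obtain ⟨x, rfl⟩ := Submodule.Quotient.mk_surjective _ x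
    obtain ⟨s, hs⟩ := hreg x
    refine ⟨x * s, ?_, ?_⟩
    · rw [← op_smul_mk]
      exact Submodule.smul_mem _ _ (Submodule.mem_span_singleton_self _)
    · intro h hh
      obtain ⟨c, rfl⟩ := Submodule.mem_span_singleton.1 hh
      rw [map_smul, lmulQ_mk, hs]
  | sup H₁ H₂ _ _ h₁ h₂ =>
    obtain ⟨e₁, m₁, i₁⟩ := h₁
    obtain ⟨e₂, m₂, i₂⟩ := h₂
    obtain ⟨s, hs⟩ := hreg ((1 - e₁) * e₂)
    refine ⟨e₁ + (1 - e₁) * e₂ * s * (1 - e₁), ?_, ?_⟩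
    · have : e₁ + (1 - e₁) * e₂ * s * (1 - e₁) =
        e₁ * (1 - e₂ * s * (1 - e₁)) + e₂ * (s * (1 - e₁)) := by noncomm_ring
      rw [this, Submodule.Quotient.mk_add, ← op_smul_mk, ← op_smul_mk]
      exact Submodule.add_mem_sup (Submodule.smul_mem _ _ m₁) (Submodule.smul_mem _ _ m₂)
    · intro h hh
      obtain ⟨a, ha, b, hb, rfl⟩ := Submodule.mem_sup.1 hh
      rw [map_add]
      congr 1
      · have ha' := i₁ a ha
        simp only [map_add, map_mul, map_sub, map_one, LinearMap.add_apply, Module.End.mul_apply,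
          LinearMap.sub_apply, Module.End.one_apply, ha', sub_self, map_zero, add_zero]
      · have hb' := i₂ b hb
        have h2 : (e₁ + (1 - e₁) * e₂ * s * (1 - e₁)) * e₂ = e₂ := by
          calc _ = e₁ * e₂ + (1 - e₁) * e₂ * s * ((1 - e₁) * e₂) := by noncomm_ring
            _ = e₂ := by rw [hs]; noncomm_ring
        conv_lhs => rw [← hb', ← Module.End.mul_apply, ← map_mul, h2, hb']

theorem exists_unit (hreg : IsVNRegular R) (S : Submodule Rᵐᵒᵖ R)
    (hS : ∀ r x : R, x ∈ S → r * x ∈ S) (H : Submodule Rᵐᵒᵖ (R ⧸ S)) (hH : H.FG)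
    (hinv : H.IsFullyInvariant) :
    ∃ e : R, Submodule.Quotient.mk e ∈ H ∧ (∀ h ∈ H, lmulQ S hS e h = h) ∧
      ∀ x : R, (Submodule.Quotient.mk x : R ⧸ S) ∈ H →
        (Submodule.Quotient.mk (x * e) : R ⧸ S) = Submodule.Quotient.mk x := by
  obtain ⟨e, he, hl⟩ := exists_leftId hreg S hS H hH
  refine ⟨e, he, hl, ?_⟩
  intro x hx
  obtain ⟨s, hs⟩ := hreg (x - x * e)
  have hy : (Submodule.Quotient.mk (x - x * e) : R ⧸ S) ∈ H := by
    rw [Submodule.Quotient.mk_sub, ← op_smul_mk]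
    exact sub_mem hx (Submodule.smul_mem _ _ hx)
  have h1 := hinv (lmulQ S hS s) hy
  have h2 : lmulQ S hS (x - x * e) (lmulQ S hS s (Submodule.Quotient.mk (x - x * e))) = 0 := by
    rw [map_sub, map_mul, LinearMap.sub_apply, Module.End.mul_apply, hl _ h1, sub_self]
  rw [lmulQ_mk, lmulQ_mk, ← mul_assoc, hs, Submodule.Quotient.mk_sub, sub_eq_zero] at h2
  exact h2.symm

theorem component_finite (hreg : IsVNRegular R) (hpfa : HasPFA R) (S : Submodule Rᵐᵒᵖ R)
    (hS : ∀ r x : R, x ∈ S → r * x ∈ S) (T : Submodule Rᵐᵒᵖ (R ⧸ S)) [hT : IsSimpleModule Rᵐᵒᵖ T] :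
    Module.Finite Rᵐᵒᵖ (isotypicComponent Rᵐᵒᵖ (R ⧸ S) T) := by
  have hart := hpfa T hT
  set P := rightAnnihilator R T with hP
  have hSP : S ≤ P := by
    intro s hs t
    apply Subtype.ext
    obtain ⟨t, ht⟩ := t
    obtain ⟨x, rfl⟩ := Submodule.Quotient.mk_surjective _ t
    exact (Submodule.Quotient.mk_eq_zero _).2 (hS x s hs)
  have hPl : ∀ r x : R, x ∈ P → r * x ∈ P := by
    intro r x hx t
    rw [MulOpposite.op_mul, mul_smul]
    exact hx _
  let A : Submodule Rᵐᵒᵖ (R ⧸ S) :=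
    { carrier := {n | ∀ p ∈ P, MulOpposite.op p • n = 0}
      add_mem' := fun ha hb p hp => by rw [smul_add, ha p hp, hb p hp, add_zero]
      zero_mem' := fun p hp => smul_zero _
      smul_mem' := fun c n hn p hp => by
        rw [← mul_smul]
        exact hn _ (hPl c.unop p hp) }
  have hA : isotypicComponent Rᵐᵒᵖ (R ⧸ S) T ≤ A := by
    refine sSup_le ?_
    rintro W ⟨e⟩ w hw p hp
    have h1 : MulOpposite.op p • (⟨w, hw⟩ : W) = 0 := by
      apply e.injective
      rw [map_smul, map_zero]; exact hp _
    exact congrArg Subtype.val h1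
  let g : (R ⧸ S) →ₗ[Rᵐᵒᵖ] (R ⧸ P) := Submodule.factor hSP
  have hg : Function.Injective (g ∘ₗ (isotypicComponent Rᵐᵒᵖ (R ⧸ S) T).subtype) := by
    rw [injective_iff_map_eq_zero]
    rintro ⟨h, hh⟩ h0
    obtain ⟨x, rfl⟩ := Submodule.Quotient.mk_surjective _ h
    have hxP : x ∈ P := (Submodule.Quotient.mk_eq_zero _).1 h0
    obtain ⟨s, hs⟩ := hreg x
    apply Subtype.ext
    change Submodule.Quotient.mk x = 0
    rw [← hs, ← op_smul_mk]
    refine hA ?_ x hxP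
    rw [← op_smul_mk]
    exact Submodule.smul_mem _ _ hh
  have : IsArtinian Rᵐᵒᵖ (isotypicComponent Rᵐᵒᵖ (R ⧸ S) T) := isArtinian_of_injective _ hg
  exact (IsSemisimpleModule.finite_tfae.out 0 2).mpr this

theorem end_matrix {A : Type*} {M : Type u} [Ring A] [AddCommGroup M] [Module A M]
    [Module.Finite A M] [Nontrivial M] [IsSemisimpleModule A M] (h : IsIsotypic A M) :
    ∃ (n : ℕ) (K : Type u) (_ : DivisionRing K), 0 < n ∧
      Nonempty (Module.End A M ≃+* Matrix (Fin n) (Fin n) K) := by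
  classical
  obtain ⟨n, hn, T, hT, ⟨e⟩⟩ := h.linearEquiv_fun
  exact ⟨n, Module.End A T, inferInstance, Nat.pos_of_ne_zero hn.out,
    ⟨e.conjRingEquiv.trans (endVecRingEquivMatrixEnd ..)⟩⟩

theorem component_end (S : Submodule Rᵐᵒᵖ R) (H : isotypicComponents Rᵐᵒᵖ (R ⧸ S))
    (hf : Module.Finite Rᵐᵒᵖ H.1) :
    ∃ (n : ℕ) (K : Type u) (_ : DivisionRing K), 0 < n ∧
      Nonempty (Module.End Rᵐᵒᵖ H.1 ≃+* Matrix (Fin n) (Fin n) K) :=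
  have hne : Nontrivial H.1 := inferInstance
  have hss : IsSemisimpleModule Rᵐᵒᵖ H.1 := inferInstance
  end_matrix (IsIsotypic.isotypicComponents H.2)

/-- left multiplication on a fully invariant submodule -/
def lmulH (S : Submodule Rᵐᵒᵖ R) (hS : ∀ r x : R, x ∈ S → r * x ∈ S)
    (H : Submodule Rᵐᵒᵖ (R ⧸ S)) (hH : H.IsFullyInvariant) : R →+* Module.End Rᵐᵒᵖ H where
  toFun r := (lmulQ S hS r).restrict (fun x hx => hH _ hx)
  map_one' := by
    refine LinearMap.ext fun x => Subtype.ext ?_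
    simp
  map_mul' r s := by
    refine LinearMap.ext fun x => Subtype.ext ?_
    simp
  map_zero' := by
    refine LinearMap.ext fun x => Subtype.ext ?_
    simp
  map_add' r s := by
    refine LinearMap.ext fun x => Subtype.ext ?_
    simp

theorem lmulH_coe (S : Submodule Rᵐᵒᵖ R) (hS : ∀ r x : R, x ∈ S → r * x ∈ S)
    (H : Submodule Rᵐᵒᵖ (R ⧸ S)) (hH : H.IsFullyInvariant) (r : R) (h : H) :
    (lmulH S hS H hH r h : R ⧸ S) = lmulQ S hS r h := rfl

theorem lmulH_eq_of_mk_eq (S : Submodule Rᵐᵒᵖ R) (hS : ∀ r x : R, x ∈ S → r * x ∈ S)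
    (H : Submodule Rᵐᵒᵖ (R ⧸ S)) (hH : H.IsFullyInvariant) (x y : R)
    (h : (Submodule.Quotient.mk x : R ⧸ S) = Submodule.Quotient.mk y) :
    lmulH S hS H hH x = lmulH S hS H hH y := by
  refine LinearMap.ext fun z => Subtype.ext ?_
  rw [lmulH_coe, lmulH_coe]
  obtain ⟨z, hz⟩ := z
  obtain ⟨w, rfl⟩ := Submodule.Quotient.mk_surjective _ z
  simp only [lmulQ_mk]
  rw [← op_smul_mk, h, op_smul_mk]

theorem layer_of_regular (hreg : IsVNRegular R) (hpfa : HasPFA R) (S : Submodule Rᵐᵒᵖ R)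
    (hS : ∀ r x : R, x ∈ S → r * x ∈ S) :
    ∃ (n : isotypicComponents Rᵐᵒᵖ (R ⧸ S) → ℕ) (K : isotypicComponents Rᵐᵒᵖ (R ⧸ S) → Type u)
      (_ : ∀ β, DivisionRing (K β))
      (φ : ↥(moduleSocle Rᵐᵒᵖ (R ⧸ S)) ≃+
        (Π₀ β : isotypicComponents Rᵐᵒᵖ (R ⧸ S), Matrix (Fin (n β)) (Fin (n β)) (K β))),
      (∀ β, 0 < n β) ∧
      (∀ (a b c : ↥(moduleSocle Rᵐᵒᵖ (R ⧸ S))) (x y : R),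
        S.mkQ x = ↑a → S.mkQ y = ↑b → S.mkQ (x * y) = ↑c → ∀ β, φ c β = φ a β * φ b β) ∧
      (∀ β, (β.1 : Set (R ⧸ S)) =
        Subtype.val '' {s : ↥(moduleSocle Rᵐᵒᵖ (R ⧸ S)) | ∀ γ, γ ≠ β → φ s γ = 0}) ∧
      (∀ β : isotypicComponents Rᵐᵒᵖ (R ⧸ S), β.1.FG) ∧
      (moduleSocle Rᵐᵒᵖ (R ⧸ S) = ⊤ → Finite (isotypicComponents Rᵐᵒᵖ (R ⧸ S))) ∧
      (Finite (isotypicComponents Rᵐᵒᵖ (R ⧸ S)) → ∃ e : R,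
        Submodule.Quotient.mk e ∈ moduleSocle Rᵐᵒᵖ (R ⧸ S) ∧
        ∀ s ∈ moduleSocle Rᵐᵒᵖ (R ⧸ S), lmulQ S hS e s = s) := by
  classical
  have hfin : ∀ β : isotypicComponents Rᵐᵒᵖ (R ⧸ S), Module.Finite Rᵐᵒᵖ β.1 := by
    rintro ⟨_, T, hT, rfl⟩
    exact component_finite hreg hpfa S hS T
  have hinv : ∀ β : isotypicComponents Rᵐᵒᵖ (R ⧸ S), β.1.IsFullyInvariant :=
    fun β => Submodule.IsFullyInvariant.of_mem_isotypicComponents β.2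
  have hfg : ∀ β : isotypicComponents Rᵐᵒᵖ (R ⧸ S), β.1.FG :=
    fun β => Module.Finite.iff_fg.1 (hfin β)
  choose e he hl hr using fun β : isotypicComponents Rᵐᵒᵖ (R ⧸ S) =>
    exists_unit hreg S hS β.1 (hfg β) (hinv β)
  choose n K inst hn ψ using fun β => component_end S β (hfin β)
  replace ψ := fun β => (ψ β).some
  have hle : ∀ β : isotypicComponents Rᵐᵒᵖ (R ⧸ S), β.1 ≤ moduleSocle Rᵐᵒᵖ (R ⧸ S) := by
    rintro ⟨_, T, hT, rfl⟩
    refine sSup_le_sSup ?_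
    rintro W ⟨e⟩
    exact IsSimpleModule.congr e
  have hsup : moduleSocle Rᵐᵒᵖ (R ⧸ S) ≤ ⨆ β : isotypicComponents Rᵐᵒᵖ (R ⧸ S), β.1 := by
    refine sSup_le fun W hW => ?_
    exact le_iSup_of_le (⟨_, W, hW, rfl⟩ : isotypicComponents Rᵐᵒᵖ (R ⧸ S))
      (Submodule.le_isotypicComponent W)
  -- orthogonality
  have horth : ∀ β γ : isotypicComponents Rᵐᵒᵖ (R ⧸ S), β ≠ γ → ∀ x : R,
      (Submodule.Quotient.mk x : R ⧸ S) ∈ γ.1 → lmulH S hS β.1 (hinv β) x = 0 := by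
    intro β γ hne x hx
    refine LinearMap.ext fun z => Subtype.ext ?_
    have h1 := (lmulH S hS β.1 (hinv β) x z).2
    have h2 : (lmulH S hS β.1 (hinv β) x z : R ⧸ S) ∈ γ.1 := by
      rw [lmulH_coe]
      obtain ⟨z, hz⟩ := z
      obtain ⟨w, rfl⟩ := Submodule.Quotient.mk_surjective _ z
      simp only [lmulQ_mk]
      rw [← op_smul_mk]
      exact Submodule.smul_mem _ _ hx
    have hd : Disjoint β.1 γ.1 := (sSupIndep_isotypicComponents Rᵐᵒᵖ (R ⧸ S)).pairwiseDisjoint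
      β.2 γ.2 (fun h => hne (Subtype.ext h))
    exact Submodule.disjoint_def.1 hd _ h1 h2
  let N := Π₀ β : isotypicComponents Rᵐᵒᵖ (R ⧸ S), Matrix (Fin (n β)) (Fin (n β)) (K β)
  let ev : ∀ β : isotypicComponents Rᵐᵒᵖ (R ⧸ S),
      Matrix (Fin (n β)) (Fin (n β)) (K β) →+ ↥(moduleSocle Rᵐᵒᵖ (R ⧸ S)) := fun β =>
    { toFun := fun A => ⟨((ψ β).symm A ⟨_, he β⟩ : β.1), hle β (Subtype.mem _)⟩
      map_zero' := by apply Subtype.ext; simp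
      map_add' := fun A B => by apply Subtype.ext; simp }
  let Ψ : N →+ ↥(moduleSocle Rᵐᵒᵖ (R ⧸ S)) := DFinsupp.sumAddHom ev
  have hΨs : ∀ γ A, Ψ (DFinsupp.single γ A) = ev γ A :=
    fun γ A => DFinsupp.sumAddHom_single ev γ A
  -- value of lifted left multiplication
  have hΦ : ∀ (v : N) (x : R), (Submodule.Quotient.mk x : R ⧸ S) = (Ψ v).1 →
      ∀ β, ψ β (lmulH S hS β.1 (hinv β) x) = v β := by
    intro v
    induction v using DFinsupp.induction with
    | h0 =>
      intro x hx β
      have : lmulH S hS β.1 (hinv β) x = lmulH S hS β.1 (hinv β) 0 :=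
        lmulH_eq_of_mk_eq _ _ _ _ _ _ (by rw [hx]; simp)
      rw [this, map_zero, map_zero]; rfl
    | ha γ A v _ _ ih =>
      intro x hx β
      obtain ⟨y, hy⟩ := Submodule.Quotient.mk_surjective _ (Ψ v).1
      obtain ⟨z, hz⟩ := Submodule.Quotient.mk_surjective _ (ev γ A).1
      have : lmulH S hS β.1 (hinv β) x = lmulH S hS β.1 (hinv β) (z + y) := by
        apply lmulH_eq_of_mk_eq
        rw [hx, Submodule.Quotient.mk_add, hz, hy, map_add, hΨs]
        rfl
      rw [this, map_add, map_add, ih y hy β, DFinsupp.add_apply]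
      congr 1
      have hzγ : (Submodule.Quotient.mk z : R ⧸ S) ∈ γ.1 := by
        rw [hz]; exact Subtype.mem _
      by_cases h : β = γ
      · subst h
        rw [DFinsupp.single_eq_same]
        rw [← (ψ β).apply_symm_apply A]
        congr 1
        refine LinearMap.ext fun w => Subtype.ext ?_
        rw [lmulH_coe]
        obtain ⟨w, hw⟩ := w
        obtain ⟨w, rfl⟩ := Submodule.Quotient.mk_surjective _ w
        simp only [lmulQ_mk]
        have h3 : (⟨Submodule.Quotient.mk w, hw⟩ : β.1) = MulOpposite.op w • ⟨_, he β⟩ := by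
          apply Subtype.ext
          have := hl β _ hw
          rw [lmulQ_mk] at this
          exact this.symm
        rw [h3, map_smul]
        rw [← op_smul_mk, hz]
        rfl
      · rw [horth β γ h z hzγ, map_zero, DFinsupp.single_eq_of_ne h]
  have hinj : Function.Injective Ψ := by
    intro v w h
    obtain ⟨x, hx⟩ := Submodule.Quotient.mk_surjective _ (Ψ v).1
    ext1 β
    rw [← hΦ v x hx β, ← hΦ w x (by rw [hx, h]) β]
  have hcomp : ∀ (β : isotypicComponents Rᵐᵒᵖ (R ⧸ S)) (x : R)
      (hx : (Submodule.Quotient.mk x : R ⧸ S) ∈ β.1),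
      Ψ (DFinsupp.single β (ψ β (lmulH S hS β.1 (hinv β) x))) = ⟨_, hle β hx⟩ := by
    intro β x hx
    apply Subtype.ext
    rw [hΨs]
    simp only [ev, AddMonoidHom.coe_mk, ZeroHom.coe_mk,
      RingEquiv.symm_apply_apply, lmulH_coe, lmulQ_mk]
    exact hr β x hx
  have hsurj : Function.Surjective Ψ := by
    have : ∀ s ∈ ⨆ β : isotypicComponents Rᵐᵒᵖ (R ⧸ S), β.1, ∃ v, (Ψ v).1 = s := by
      intro s hs
      induction hs using Submodule.iSup_induction' with
      | mem β x hx =>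
        obtain ⟨x, rfl⟩ := Submodule.Quotient.mk_surjective _ x
        exact ⟨_, congrArg Subtype.val (hcomp β x hx)⟩
      | zero => exact ⟨0, by simp⟩
      | add x y _ _ h1 h2 =>
        obtain ⟨v, rfl⟩ := h1
        obtain ⟨w, rfl⟩ := h2
        exact ⟨v + w, by simp⟩
    intro s
    obtain ⟨v, hv⟩ := this s.1 (hsup s.2)
    exact ⟨v, Subtype.ext hv⟩
  let Ψe : N ≃+ ↥(moduleSocle Rᵐᵒᵖ (R ⧸ S)) := AddEquiv.ofBijective Ψ ⟨hinj, hsurj⟩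
  have hφ : ∀ (s : ↥(moduleSocle Rᵐᵒᵖ (R ⧸ S))) (x : R),
      (Submodule.Quotient.mk x : R ⧸ S) = s.1 →
      ∀ β, Ψe.symm s β = ψ β (lmulH S hS β.1 (hinv β) x) := by
    intro s x hx β
    refine (hΦ (Ψe.symm s) x ?_ β).symm
    rw [hx]
    exact congrArg Subtype.val (Ψe.apply_symm_apply s).symm
  refine ⟨n, K, inst, Ψe.symm, hn, ?_, ?_, hfg, ?_, ?_⟩
  · intro a b c x y hx hy hxy β
    rw [hφ a x hx, hφ b y hy, hφ c (x * y) hxy, map_mul, map_mul]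
  · intro β
    ext s
    constructor
    · intro hs
      obtain ⟨x, rfl⟩ := Submodule.Quotient.mk_surjective _ s
      refine ⟨⟨_, hle β hs⟩, ?_, rfl⟩
      intro γ hγ
      rw [hφ _ x rfl, horth γ β hγ x hs, map_zero]
    · rintro ⟨s, hs, rfl⟩
      obtain ⟨v, rfl⟩ := Ψe.surjective s
      have hs' : ∀ γ, γ ≠ β → v γ = 0 := by
        intro γ hγ; have := hs γ hγ; rwa [AddEquiv.symm_apply_apply] at this
      have hv : v = DFinsupp.single β (v β) := by
        ext1 γ
        by_cases h : γ = β
        · subst h; simp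
        · rw [hs' γ h, DFinsupp.single_eq_of_ne h]
      have : (Ψe v).1 = (ev β (v β)).1 := by
        change (Ψ v).1 = _
        conv_lhs => rw [hv, hΨs]
      rw [this]
      exact Subtype.mem _
  · intro htop
    let one : ↥(moduleSocle Rᵐᵒᵖ (R ⧸ S)) := ⟨Submodule.Quotient.mk 1, by rw [htop]; trivial⟩
    have h1 : ∀ β, β ∈ (Ψe.symm one).support := by
      intro β
      rw [DFinsupp.mem_support_toFun, hφ one 1 rfl β, map_one, map_one]
      have : Nonempty (Fin (n β)) := ⟨⟨0, hn β⟩⟩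
      exact one_ne_zero
    exact Finite.of_finite_univ ((Ψe.symm one).support.finite_toSet.subset (fun β _ => h1 β))
  · intro hf
    have := Fintype.ofFinite (isotypicComponents Rᵐᵒᵖ (R ⧸ S))
    let v : N := DFinsupp.equivFunOnFintype.symm (fun β => 1)
    obtain ⟨x, hx⟩ := Submodule.Quotient.mk_surjective _ (Ψ v).1
    refine ⟨x, by rw [hx]; exact Subtype.mem _, ?_⟩
    have hx1 : ∀ β, lmulH S hS β.1 (hinv β) x = 1 := by
      intro β
      apply (ψ β).injective
      rw [hΦ v x hx β, map_one]; rfl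
    have : moduleSocle Rᵐᵒᵖ (R ⧸ S) ≤ LinearMap.eqLocus (lmulQ S hS x) LinearMap.id := by
      refine hsup.trans (iSup_le fun β h hh => ?_)
      have := congrArg Subtype.val (LinearMap.congr_fun (hx1 β) ⟨h, hh⟩)
      exact this
    exact fun s hs => this hs

theorem socle_eq_top_of_unit (hsa : IsRightSemiartinian R) (α : Ordinal.{u}) (e : R)
    (he : Submodule.Quotient.mk e ∈ moduleSocle Rᵐᵒᵖ (R ⧸ socleSeq R α))
    (hl : ∀ s ∈ moduleSocle Rᵐᵒᵖ (R ⧸ socleSeq R α),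
      lmulQ _ (socleSeq_left α) e s = s) : socleSeq R (α + 1) = ⊤ := by
  by_contra hne
  have hsoc := hsa _ hne
  have hker : ∀ x, x ∈ socleSeq R (α + 1) → (1 - e) * x ∈ socleSeq R α := by
    intro x hx
    have := hl _ ((mem_socleSeq_succ α x).1 hx)
    rw [lmulQ_mk] at this
    have := (Submodule.Quotient.eq _).1 this.symm
    rwa [sub_mul, one_mul]
  let g : (R ⧸ socleSeq R (α + 1)) →ₗ[Rᵐᵒᵖ] (R ⧸ socleSeq R α) :=
    Submodule.mapQ _ _ (lmulR (1 - e)) hker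
  have hg : ∀ x, g (Submodule.Quotient.mk x) = Submodule.Quotient.mk ((1 - e) * x) :=
    fun x => rfl
  have heR : e ∈ socleSeq R (α + 1) := (mem_socleSeq_succ α e).2 he
  apply hsoc
  rw [eq_bot_iff]
  intro s hs
  have h1 := moduleSocle_map_le g hs
  obtain ⟨x, rfl⟩ := Submodule.Quotient.mk_surjective _ s
  rw [Submodule.mem_comap, hg, ← mem_socleSeq_succ] at h1
  rw [Submodule.mem_bot, Submodule.Quotient.mk_eq_zero]
  have : x = (1 - e) * x + e * x := by noncomm_ring
  rw [this]
  exact add_mem h1 (right_mem heR x)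

end helpers

/-- Theorem 7 of the paper, after Ružička–Trlifaj–Žemlička: a right
semiartinian ring is von Neumann regular with primitive factors artinian iff each layer
of its socle sequence decomposes as a direct sum of full matrix rings over skew-fields
as described in `LayerDecomposition`. -/
theorem vnRegular_pfa_iff_layerDecomposition (R : Type u) [Ring R]
    (hsa : IsRightSemiartinian R)
    (σ : Ordinal.{u}) (hσ : IsLeast {o : Ordinal.{u} | socleSeq R o = ⊤} (σ + 1)) :
    (IsVNRegular R ∧ HasPFA R) ↔
      ∀ α : Ordinal.{u}, α ≤ σ →
        ∃ (ι : Type u) (n : ι → ℕ) (K : ι → Type u) (inst : ∀ β, DivisionRing (K β)),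
          @LayerDecomposition R _ σ α ι n K inst := by
  constructor
  · rintro ⟨hreg, hpfa⟩ α hα
    obtain ⟨n, K, inst, φ, hn, hm, hH, hfg, htop, hfin⟩ :=
      layer_of_regular hreg hpfa (socleSeq R α) (socleSeq_left α)
    refine ⟨isotypicComponents Rᵐᵒᵖ (R ⧸ socleSeq R α), n, K, inst, φ, hn, ?_, hm,
      Subtype.val, hH, ?_, hfg, Subtype.val_injective, ?_⟩
    · constructor
      · intro hinf
        refine lt_of_le_of_ne hα ?_
        rintro rfl
        refine not_finite_iff_infinite.2 hinf (htop ?_)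
        have h1 : socleSeq R (α + 1) = ⊤ := hσ.1
        rw [eq_top_iff]
        intro s _
        obtain ⟨x, rfl⟩ := Submodule.Quotient.mk_surjective _ s
        rw [← mem_socleSeq_succ, h1]
        trivial
      · intro hlt
        rw [← not_finite_iff_infinite]
        intro hf
        obtain ⟨e, he, hl⟩ := hfin hf
        have h1 := socle_eq_top_of_unit hsa α e he hl
        have h2 : σ + 1 ≤ α + 1 := hσ.2 h1
        have h3 : σ ≤ α := Order.lt_add_one_iff.1 (Order.add_one_le_iff.1 h2)
        exact absurd hlt (not_lt.2 h3)
    · rintro ⟨_, T, hT, rfl⟩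
      exact ⟨T, hT, rfl⟩
    · rintro H' ⟨T, hT, rfl⟩
      exact ⟨⟨_, T, hT, rfl⟩, rfl⟩
  · intro h
    have htop : socleSeq R (σ + 1) = ⊤ := hσ.1
    refine ⟨fun r => ?_, pfa_of_layers σ htop h⟩
    exact regular_of_layers σ h (σ + 1) le_rfl r (by rw [htop]; trivial)
end

section
/- Let R be a semiartinian von Neumann regular ring with primitive factors artinian, with right socle sequence (S_α | α ≤ σ+1), and suppose the socle Soc(R) = S_1 has countably many homogeneous components (λ_0 is countable). If R is right hereditary, then σ is a countable ordinal and each proper layer L_α (0 < α < σ) is countably generated. -/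
universe u

open Submodule Function

/-- Every nonzero right ideal contains a simple right ideal. -/
theorem aux_exists_simple (R : Type u) [Ring R] (hsa : IsRightSemiartinian R)
    (N : Submodule Rᵐᵒᵖ R) (hN : N ≠ ⊥) :
    ∃ W : Submodule Rᵐᵒᵖ R, IsSimpleModule Rᵐᵒᵖ W ∧ W ≤ N := by
  obtain ⟨x, hx, hx0⟩ := (Submodule.ne_bot_iff N).1 hN
  let f : R →ₗ[Rᵐᵒᵖ] R :=
    { toFun := fun r => x * r
      map_add' := fun a b => mul_add x a b
      map_smul' := fun c a => by simp [MulOpposite.smul_eq_mul_unop, mul_assoc] }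
  have hker : LinearMap.ker f ≠ ⊤ := by
    intro h
    have h1 : (1 : R) ∈ LinearMap.ker f := by rw [h]; trivial
    apply hx0
    have h2 : x * 1 = 0 := h1
    simpa using h2
  have hs := hsa _ hker
  have hex : ∃ W : Submodule Rᵐᵒᵖ (R ⧸ LinearMap.ker f), IsSimpleModule Rᵐᵒᵖ W := by
    by_contra hcon
    push Not at hcon
    apply hs
    unfold moduleSocle
    rw [sSup_eq_bot]
    intro W hW
    exact absurd hW (hcon W)
  obtain ⟨W, hW⟩ := hex
  let g : (R ⧸ LinearMap.ker f) →ₗ[Rᵐᵒᵖ] R := (LinearMap.ker f).liftQ f le_rfl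
  have hg : Function.Injective g := by
    rw [← LinearMap.ker_eq_bot]
    exact Submodule.ker_liftQ_eq_bot _ _ _ le_rfl
  refine ⟨W.map g, ?_, ?_⟩
  · exact IsSimpleModule.congr (Submodule.equivMapOfInjective g hg W).symm
  · rintro _ ⟨y, _, rfl⟩
    obtain ⟨r, rfl⟩ := Submodule.mkQ_surjective _ y
    have : g ((LinearMap.ker f).mkQ r) = x * r := by
      simp [g, f]
    rw [this]
    exact N.smul_mem (MulOpposite.op r) hx

/-- Homogeneous components of the socle are finitely generated. -/
theorem aux_homog_fg (R : Type u) [Ring R] (hvnr : IsVNRegular R) (hpfa : HasPFA R)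
    (H : Submodule Rᵐᵒᵖ R) (hH : IsHomogeneousComponent R R H) : H.FG := by
  obtain ⟨T, hT, rfl⟩ := hH
  change (isotypicComponent Rᵐᵒᵖ R T).FG
  set H := isotypicComponent Rᵐᵒᵖ R T with hHdef
  have hss : IsSemisimpleModule Rᵐᵒᵖ H := by rw [hHdef]; infer_instance
  have hart := hpfa T hT
  have hkill : ∀ r ∈ rightAnnihilator R T, ∀ h ∈ H, h * r = 0 := by
    intro r hr h hh
    let A : Submodule Rᵐᵒᵖ R := H
    rw [hHdef, isotypicComponent, sSup_eq_iSup'] at hh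
    refine Submodule.iSup_induction _ (motive := fun h => h * r = 0) hh ?_ (zero_mul r) ?_
    · rintro ⟨W, ⟨e⟩⟩ x hx
      have h1 : e (MulOpposite.op r • (⟨x, hx⟩ : W)) = 0 := by
        rw [map_smul]; exact hr _
      have h2 := (LinearEquiv.map_eq_zero_iff e).1 h1
      exact congrArg Subtype.val h2
    · intro a b ha hb
      rw [add_mul, ha, hb, add_zero]
  let φ : H →ₗ[Rᵐᵒᵖ] R ⧸ rightAnnihilator R T :=
    (rightAnnihilator R T).mkQ ∘ₗ H.subtype
  have hφ : Function.Injective φ := by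
    rw [injective_iff_map_eq_zero]
    rintro ⟨h, hh⟩ h0
    have hr : h ∈ rightAnnihilator R T := by
      simpa [φ] using h0
    obtain ⟨s, hs⟩ := hvnr h
    have h3 : h * s ∈ H := H.smul_mem (MulOpposite.op s) hh
    have h4 := hkill h hr _ h3
    rw [hs] at h4
    exact Subtype.ext h4
  have : IsArtinian Rᵐᵒᵖ H := isArtinian_of_injective φ hφ
  have hfin : Module.Finite Rᵐᵒᵖ H :=
    ((IsSemisimpleModule.finite_tfae (R := Rᵐᵒᵖ) (M := H)).out 0 2).2 this
  exact Module.Finite.iff_fg.1 hfin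

/-- The socle is countably generated. -/
theorem aux_socle_cg (R : Type u) [Ring R] (hvnr : IsVNRegular R) (hpfa : HasPFA R)
    (hLambda0 : {H : Submodule Rᵐᵒᵖ R | IsHomogeneousComponent R R H}.Countable) :
    ∃ S : Set R, S.Countable ∧ Submodule.span Rᵐᵒᵖ S = moduleSocle Rᵐᵒᵖ R := by
  choose! F hF using fun H (hH : IsHomogeneousComponent R R H) => aux_homog_fg R hvnr hpfa H hH
  refine ⟨⋃ H ∈ {H : Submodule Rᵐᵒᵖ R | IsHomogeneousComponent R R H}, (F H : Set R),
    hLambda0.biUnion fun H _ => (F H).countable_toSet, ?_⟩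
  rw [Submodule.span_iUnion₂]
  apply le_antisymm
  · refine iSup₂_le fun H hH => ?_
    rw [hF H hH]
    obtain ⟨T, hT, rfl⟩ := hH
    refine sSup_le fun W ⟨e⟩ => le_sSup ?_
    exact IsSimpleModule.congr e
  · refine sSup_le fun W hW => ?_
    have hH : IsHomogeneousComponent R R (isotypicComponent Rᵐᵒᵖ R W) := ⟨W, hW, rfl⟩
    refine le_trans ?_ (le_iSup₂_of_le _ hH (hF _ hH).ge)
    exact W.le_isotypicComponent

/-- Right ideals are countably generated. -/
theorem aux_ideal_cg (R : Type u) [Ring R]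
    (hsa : IsRightSemiartinian R) (hvnr : IsVNRegular R) (hpfa : HasPFA R)
    (hLambda0 : {H : Submodule Rᵐᵒᵖ R | IsHomogeneousComponent R R H}.Countable)
    (hher : ∀ I : Submodule Rᵐᵒᵖ R, Module.Projective Rᵐᵒᵖ ↥I) (I : Submodule Rᵐᵒᵖ R) :
    ∃ S : Set I, S.Countable ∧ Submodule.span Rᵐᵒᵖ S = ⊤ := by
  classical
  obtain ⟨D, hD, hDspan⟩ := aux_socle_cg R hvnr hpfa hLambda0
  set Soc := moduleSocle Rᵐᵒᵖ R with hSoc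
  have hss : IsSemisimpleModule Rᵐᵒᵖ Soc := by
    rw [hSoc, moduleSocle, sSup_eq_iSup]
    exact isSemisimpleModule_biSup_of_isSemisimpleModule_submodule fun W hW => by
      have : IsSimpleModule Rᵐᵒᵖ W := hW
      infer_instance
  -- a projection of the socle onto its intersection with the ideal
  obtain ⟨C, hC⟩ := exists_isCompl (I.comap Soc.subtype)
  let p : Soc →ₗ[Rᵐᵒᵖ] I.comap Soc.subtype := Submodule.projectionOnto _ _ hC
  let q : Soc →ₗ[Rᵐᵒᵖ] I :=
    (Soc.subtype.restrict (p := I.comap Soc.subtype) (q := I) (fun _ hx => hx)) ∘ₗ p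
  have hq : ∀ x (hx : x ∈ Soc) (hxI : x ∈ I), q ⟨x, hx⟩ = ⟨x, hxI⟩ := by
    intro x hx hxI
    have : p ⟨x, hx⟩ = ⟨⟨x, hx⟩, hxI⟩ :=
      Submodule.projectionOnto_apply_left hC ⟨⟨x, hx⟩, hxI⟩
    apply Subtype.ext
    simp [q, this]
  obtain ⟨s, hs⟩ := (hher I).out
  have hDS : ∀ d ∈ D, d ∈ Soc := fun d hd => hDspan ▸ Submodule.subset_span hd
  have : Countable D := hD.to_subtype
  let E : Set I := ⋃ d : D, ((s (q ⟨d, hDS d d.2⟩)).support : Set I)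
  refine ⟨E, Set.countable_iUnion fun d => Finset.countable_toSet _, ?_⟩
  have hzero : ∀ i ∉ E, ∀ x, s x i = 0 := by
    intro i hi
    let f0 : I →ₗ[Rᵐᵒᵖ] Rᵐᵒᵖ := Finsupp.lapply i ∘ₗ s
    let u : Rᵐᵒᵖ →ₗ[Rᵐᵒᵖ] R :=
      { toFun := MulOpposite.unop
        map_add' := fun _ _ => rfl
        map_smul' := fun c a => by simp [MulOpposite.smul_eq_mul_unop] }
    let f : I →ₗ[Rᵐᵒᵖ] R := u ∘ₗ f0
    have hfq : f ∘ₗ q = 0 := by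
      have : (⊤ : Submodule Rᵐᵒᵖ Soc) ≤ LinearMap.ker (f ∘ₗ q) := by
        rintro ⟨x, hx⟩ -
        have hle : Submodule.span Rᵐᵒᵖ D ≤ (LinearMap.ker (f ∘ₗ q)).map Soc.subtype := by
          rw [Submodule.span_le]
          intro d hd
          have : i ∉ (s (q ⟨d, hDS d hd⟩)).support := fun h =>
            hi (Set.mem_iUnion.2 ⟨⟨d, hd⟩, h⟩)
          have h0 : s (q ⟨d, hDS d hd⟩) i = 0 := Finsupp.notMem_support_iff.1 this
          refine ⟨⟨d, hDS d hd⟩, ?_, rfl⟩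
          have h1 : u (s (q ⟨d, hDS d hd⟩) i) = 0 := by rw [h0, map_zero]
          exact h1
        rw [hDspan] at hle
        obtain ⟨y, hy, hyx⟩ := hle hx
        have h2 : y = ⟨x, hx⟩ := Subtype.ext hyx
        exact h2 ▸ hy
      exact LinearMap.ker_eq_top.1 (top_le_iff.1 this)
    have hfS : ∀ x (hxI : x ∈ I), x ∈ Soc → f ⟨x, hxI⟩ = 0 := by
      intro x hxI hx
      rw [← hq x hx hxI]
      exact LinearMap.congr_fun hfq ⟨x, hx⟩
    -- the image is projective, so the kernel splits off
    have := hher (LinearMap.range f)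
    obtain ⟨g, hg⟩ := LinearMap.exists_rightInverse_of_surjective f.rangeRestrict
      (LinearMap.range_rangeRestrict f)
    have hg' : ∀ y, f (g y) = y := fun y => congrArg Subtype.val (LinearMap.congr_fun hg y)
    let N : Submodule Rᵐᵒᵖ R := (LinearMap.range g).map I.subtype
    have hN : N = ⊥ := by
      by_contra hN
      obtain ⟨W, hW, hWN⟩ := aux_exists_simple R hsa N hN
      apply (isSimpleModule_iff_isAtom.1 hW).1
      rw [eq_bot_iff]
      intro w hw
      obtain ⟨_, ⟨y, rfl⟩, hy⟩ := hWN hw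
      have hwS : w ∈ Soc := (le_sSup (a := W) hW : W ≤ Soc) hw
      have hy' : ((g y : I) : R) = w := hy
      have h1 := hfS (g y : I) (g y).2 (hy' ▸ hwS)
      have h2 : (y : R) = 0 := by rw [← hg' y]; exact h1
      have h3 : y = 0 := Subtype.ext h2
      rw [h3, map_zero] at hy'
      rw [← hy']
      simp
    intro x
    have h1 : ((g (f.rangeRestrict x) : I) : R) ∈ N := ⟨_, ⟨_, rfl⟩, rfl⟩
    rw [hN, Submodule.mem_bot] at h1
    have h2 : g (f.rangeRestrict x) = 0 := Subtype.ext h1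
    have h3 := hg' (f.rangeRestrict x)
    rw [h2, map_zero] at h3
    have h4 : MulOpposite.unop (s x i) = 0 := h3.symm
    simpa using h4
  rw [eq_top_iff]
  rintro x -
  rw [← hs x, Finsupp.linearCombination_apply]
  refine Submodule.sum_mem _ fun i hi => Submodule.smul_mem _ _ ?_
  apply Submodule.subset_span
  by_contra hiE
  exact (Finsupp.mem_support_iff.1 hi) (hzero i hiE x)

theorem aux_socleSeq_succ (R : Type u) [Ring R] (α : Ordinal.{u}) :
    socleSeq R (α + 1) =
      Submodule.comap (socleSeq R α).mkQ (moduleSocle Rᵐᵒᵖ (R ⧸ socleSeq R α)) := by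
  simp only [socleSeq]
  rw [Ordinal.limitRecOn_add_one]
  rfl

theorem aux_socleSeq_limit (R : Type u) [Ring R] (α : Ordinal.{u}) (h : Order.IsSuccLimit α) :
    socleSeq R α = ⨆ (β : Ordinal.{u}) (_ : β < α), socleSeq R β := by
  simp only [socleSeq]
  rw [Ordinal.limitRecOn_limit _ _ _ _ h]

theorem aux_socleSeq_mono (R : Type u) [Ring R] : Monotone (socleSeq R) := by
  have key : ∀ β α : Ordinal.{u}, α ≤ β → socleSeq R α ≤ socleSeq R β := by
    intro β
    induction β using Ordinal.limitRecOn with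
    | zero => intro α h; rw [nonpos_iff_eq_zero.1 h]
    | add_one β ih =>
      intro α h
      rcases h.lt_or_eq with h | rfl
      · refine (ih α (Order.lt_add_one_iff.1 h)).trans ?_
        rw [aux_socleSeq_succ]
        intro x hx
        rw [Submodule.mem_comap, (Submodule.mkQ_apply _ x),
          (Submodule.Quotient.mk_eq_zero _).2 hx]
        exact Submodule.zero_mem _
      · exact le_rfl
    | limit β hβ ih =>
      intro α h
      rcases h.lt_or_eq with h | rfl
      · rw [aux_socleSeq_limit R β hβ]
        exact le_iSup₂_of_le α h le_rfl
      · exact le_rfl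
  exact fun α β h => key β α h

theorem aux_socleSeq_stable (R : Type u) [Ring R] (hsa : IsRightSemiartinian R)
    (α : Ordinal.{u}) (h : socleSeq R (α + 1) ≤ socleSeq R α) : socleSeq R α = ⊤ := by
  by_contra hne
  apply hsa _ hne
  rw [eq_bot_iff]
  intro y hy
  obtain ⟨x, rfl⟩ := Submodule.mkQ_surjective _ y
  have hx : x ∈ socleSeq R (α + 1) := by rw [aux_socleSeq_succ]; exact hy
  rw [Submodule.mem_bot, Submodule.mkQ_apply]
  exact (Submodule.Quotient.mk_eq_zero _).2 (h hx)

/-- Lemma 9, (1) ⟹ (2), of the paper: if a semiartinian von Neumann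
regular ring with primitive factors artinian has a socle with countably many homogeneous
components and is right hereditary, then `σ` is countable and all proper layers are
countably generated. -/
theorem countable_layers_of_hereditary (R : Type u) [Ring R]
    (hsa : IsRightSemiartinian R) (hvnr : IsVNRegular R) (hpfa : HasPFA R)
    (σ : Ordinal.{u}) (hσ : IsLeast {o : Ordinal.{u} | socleSeq R o = ⊤} (σ + 1))
    (hLambda0 : {H : Submodule Rᵐᵒᵖ R | IsHomogeneousComponent R R H}.Countable)
    (hher : ∀ I : Submodule Rᵐᵒᵖ R, Module.Projective Rᵐᵒᵖ ↥I) :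
    σ.card ≤ Cardinal.aleph0 ∧
    ∀ α : Ordinal.{u}, 0 < α → α < σ →
      ∃ S : Set (Layer R α), S.Countable ∧ Submodule.span Rᵐᵒᵖ S = ⊤ := by
  have hcg := aux_ideal_cg R hsa hvnr hpfa hLambda0 hher
  constructor
  · by_contra hcard
    have hω : Ordinal.omega 1 ≤ σ := by
      rw [← Cardinal.ord_aleph, Cardinal.ord_le, ← Cardinal.succ_aleph0, Order.succ_le_iff]
      exact not_le.1 hcard
    have hlim : Order.IsSuccLimit (Ordinal.omega.{u} 1) := Cardinal.isSuccLimit_omega 1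
    obtain ⟨S, hS, hspan⟩ := hcg (socleSeq R (Ordinal.omega 1))
    have : Countable S := hS.to_subtype
    have hdir : ∀ x ∈ socleSeq R (Ordinal.omega 1),
        ∃ β < Ordinal.omega.{u} 1, x ∈ socleSeq R β := by
      intro x hx
      rw [aux_socleSeq_limit R _ hlim, iSup_subtype'] at hx
      have : Nonempty {β : Ordinal.{u} // β < Ordinal.omega.{u} 1} :=
        ⟨⟨0, Ordinal.omega_pos 1⟩⟩
      have hd : Directed (· ≤ ·)
          (fun β : {β : Ordinal.{u} // β < Ordinal.omega.{u} 1} => socleSeq R β.1) :=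
        Monotone.directed_le fun a b hab => aux_socleSeq_mono R hab
      obtain ⟨β, hβ⟩ := (Submodule.mem_iSup_of_directed _ hd).1 hx
      exact ⟨β.1, β.2, hβ⟩
    choose b hb hbmem using fun x : S => hdir x.1.1 x.1.2
    have hγ := Ordinal.iSup_lt_omega_one hb
    set γ := ⨆ i, b i with hγdef
    have hle : socleSeq R (Ordinal.omega 1) ≤ socleSeq R γ := by
      have h1 : (⊤ : Submodule Rᵐᵒᵖ (socleSeq R (Ordinal.omega 1))) ≤
          (socleSeq R γ).comap (socleSeq R (Ordinal.omega 1)).subtype := by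
        rw [← hspan, Submodule.span_le]
        intro x hx
        exact aux_socleSeq_mono R (Ordinal.le_iSup b ⟨x, hx⟩) (hbmem ⟨x, hx⟩)
      intro x hx
      exact h1 (Submodule.mem_top (x := ⟨x, hx⟩))
    have htop := aux_socleSeq_stable R hsa γ
      ((aux_socleSeq_mono R (Order.add_one_le_of_lt hγ)).trans hle)
    have h2 : σ + 1 ≤ γ := hσ.2 htop
    have h3 : γ < σ + 1 := (hγ.trans_le hω).trans (Order.lt_add_one_iff.2 le_rfl)
    exact absurd h2 (not_le.2 h3)
  · intro α _ _
    obtain ⟨S, hS, hspan⟩ := hcg (socleSeq R (α + 1))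
    refine ⟨(layerKer R α).mkQ '' S, hS.image _, ?_⟩
    rw [← Submodule.map_span, hspan, Submodule.map_top, Submodule.range_mkQ]
end
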